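/- (Monotone convergence theorem for the Daniell extension.) Let (L, I) be an integral system on a set X, let (f_n) be a sequence in L¹ increasing pointwise to a real-valued function f : X → ℝ. Then f ∈ L¹ if and only if lim_n I¹(f_n) < ∞, and in that case I¹(f) = lim_n I¹(f_n). -/

import Mathlib

open Filter Topology

/-- An integral system on a set `X`: a linear lattice `L` of real-valued functions on `X`
(a vector subspace of `ℝ^X` closed under pointwise max and min) together with a
preintegral `I` on it (a positive linear functional that is continuous in the sense that
`I fₙ → 0` whenever `fₙ ∈ L` are nonnegative and decrease pointwise to `0`). -/
structure IntegralSystem (X : Type*) where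
  L : Set (X → ℝ)
  I : (X → ℝ) → ℝ
  zero_mem : (0 : X → ℝ) ∈ L
  add_mem : ∀ ⦃f g : X → ℝ⦄, f ∈ L → g ∈ L → f + g ∈ L
  smul_mem : ∀ (c : ℝ) ⦃f : X → ℝ⦄, f ∈ L → c • f ∈ L
  sup_mem : ∀ ⦃f g : X → ℝ⦄, f ∈ L → g ∈ L → f ⊔ g ∈ L
  inf_mem : ∀ ⦃f g : X → ℝ⦄, f ∈ L → g ∈ L → f ⊓ g ∈ L
  I_add : ∀ ⦃f g : X → ℝ⦄, f ∈ L → g ∈ L → I (f + g) = I f + I g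
  I_smul : ∀ (c : ℝ) ⦃f : X → ℝ⦄, f ∈ L → I (c • f) = c * I f
  I_pos : ∀ ⦃f : X → ℝ⦄, f ∈ L → (∀ x, 0 ≤ f x) → 0 ≤ I f
  I_cont : ∀ f : ℕ → X → ℝ, (∀ n, f n ∈ L) → (∀ n x, 0 ≤ f n x) →
    (∀ n x, f (n + 1) x ≤ f n x) →
    (∀ x, Tendsto (fun n => f n x) atTop (𝓝 0)) →
    Tendsto (fun n => I (f n)) atTop (𝓝 0)

variable {X : Type*}

/-- `f : X → (−∞,∞]` belongs to `L_↑` iff some sequence in `L` increases pointwise to `f`. -/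
def MemLup (S : IntegralSystem X) (f : X → EReal) : Prop :=
  ∃ g : ℕ → X → ℝ, (∀ n, g n ∈ S.L) ∧ (∀ n x, g n x ≤ g (n + 1) x) ∧
    ∀ x, Tendsto (fun n => ((g n x : EReal))) atTop (𝓝 (f x))

/-- For `f ∈ L_↑`, `I_↑ f = lim I (g n)` for any sequence `(g n)` in `L` increasing
pointwise to `f`; the value does not depend on the chosen sequence, so we may define it as
the supremum of all such limits. -/
noncomputable def Iup (S : IntegralSystem X) (f : X → EReal) : EReal :=
  sSup { c : EReal | ∃ g : ℕ → X → ℝ, (∀ n, g n ∈ S.L) ∧ (∀ n x, g n x ≤ g (n + 1) x) ∧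
    (∀ x, Tendsto (fun n => ((g n x : EReal))) atTop (𝓝 (f x))) ∧
    Tendsto (fun n => ((S.I (g n) : EReal))) atTop (𝓝 c) }

/-- `L_↓ = −L_↑`. -/
def MemLdown (S : IntegralSystem X) (f : X → EReal) : Prop :=
  MemLup S (fun x => -(f x))

/-- `I_↓ f = −I_↑(−f)`. -/
noncomputable def Idown (S : IntegralSystem X) (f : X → EReal) : EReal :=
  -(Iup S (fun x => -(f x)))

/-- The upper integral `Ī f = inf { I_↑ g : g ∈ L_↑, f ≤ g }` (with `inf ∅ = ∞`). -/
noncomputable def upperInt (S : IntegralSystem X) (f : X → EReal) : EReal :=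
  sInf (Iup S '' { g | MemLup S g ∧ ∀ x, f x ≤ g x })

/-- The lower integral `I̲ f = sup { I_↓ g : g ∈ L_↓, g ≤ f }` (with `sup ∅ = −∞`). -/
noncomputable def lowerInt (S : IntegralSystem X) (f : X → EReal) : EReal :=
  sSup (Idown S '' { g | MemLdown S g ∧ ∀ x, g x ≤ f x })

/-- `f : X → ℝ` is `I`-integrable iff its lower and upper integrals coincide and are finite. -/
def Integrable1 (S : IntegralSystem X) (f : X → ℝ) : Prop :=
  ∃ c : ℝ, lowerInt S (fun x => ((f x : EReal))) = (c : EReal) ∧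
    upperInt S (fun x => ((f x : EReal))) = (c : EReal)

/-- The Daniell extension `I¹` of `I`: the common value of the lower and upper integrals of
an integrable function. -/
noncomputable def Int1 (S : IntegralSystem X) (f : X → ℝ) : ℝ :=
  (upperInt S (fun x => ((f x : EReal)))).toReal

/-!
The identity `I (f ∨ g) + I (f ∧ g) = I f + I g` and continuity along increasing sequences both
pass from `I` to `I_↑`. If `f n` increases to `F`, choose `G n ∈ L_↑` above `f n` with `I_↑ (G n)`
close to the upper integral of `f n`. Replacing `G n` by `G 0 ∨ ⋯ ∨ G n` makes the sequence
increasing and only adds up the errors: by the identity, joining two majorants of `f n` costs no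
more than the sum of their integrals minus that of their meet, and the meet still lies above `f n`.
So the upper integral is continuous along increasing sequences, and
`lim I¹ (f n) ≤ I̲ F ≤ Ī F = lim I¹ (f n)`.
-/

theorem tendsto_ereal_add_of_ne_bot {ι : Type*} {l : Filter ι} {u v : ι → EReal} {a b : EReal}
    (ha : a ≠ ⊥) (hb : b ≠ ⊥) (hu : Tendsto u l (𝓝 a)) (hv : Tendsto v l (𝓝 b)) :
    Tendsto (fun i => u i + v i) l (𝓝 (a + b)) :=
  (EReal.continuousAt_add (.inr hb) (.inl ha)).tendsto.comp (hu.prodMk_nhds hv)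

namespace IntegralSystem

variable {S : IntegralSystem X} {f g : X → ℝ}

theorem sub_mem (hf : f ∈ S.L) (hg : g ∈ S.L) : f - g ∈ S.L := by
  simpa [sub_eq_add_neg] using S.add_mem hf (S.smul_mem (-1) hg)

theorem I_zero : S.I 0 = 0 := by
  simpa using S.I_smul 0 S.zero_mem

theorem I_sub (hf : f ∈ S.L) (hg : g ∈ S.L) : S.I (f - g) = S.I f - S.I g :=
  eq_sub_of_add_eq <| by rw [← S.I_add (sub_mem hf hg) hg, sub_add_cancel]

theorem I_mono (hf : f ∈ S.L) (hg : g ∈ S.L) (hfg : f ≤ g) : S.I f ≤ S.I g :=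
  sub_nonneg.1 <| I_sub hg hf ▸ S.I_pos (sub_mem hg hf) fun x => sub_nonneg.2 (hfg x)

theorem I_sup_add_I_inf (hf : f ∈ S.L) (hg : g ∈ S.L) :
    S.I (f ⊔ g) + S.I (f ⊓ g) = S.I f + S.I g := by
  rw [← S.I_add (S.sup_mem hf hg) (S.inf_mem hf hg), ← S.I_add hf hg, add_comm, inf_add_sup]

theorem tendsto_I_of_monotone {u : ℕ → X → ℝ} (hu : ∀ n, u n ∈ S.L) (hf : f ∈ S.L)
    (hmono : Monotone u) (hlim : ∀ x, Tendsto (fun n => u n x) atTop (𝓝 (f x))) :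
    Tendsto (fun n => S.I (u n)) atTop (𝓝 (S.I f)) := by
  have hle (n x) : u n x ≤ f x :=
    ((Function.monotone_eval x).comp hmono).ge_of_tendsto (hlim x) n
  have hgap : Tendsto (fun n => S.I (f - u n)) atTop (𝓝 0) :=
    S.I_cont _ (fun n => sub_mem hf (hu n)) (fun n x => sub_nonneg.2 (hle n x))
      (fun n x => sub_le_sub_left (hmono n.le_succ x) _)
      fun x => by simpa using (hlim x).const_sub (f x)
  simpa [I_sub hf (hu _)] using hgap.const_sub (S.I f)

/-- `u` is a sequence in `L` that increases pointwise to `G`, so that `G ∈ L_↑` iff some `u`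
increases to `G`. -/
structure IncreasesTo (S : IntegralSystem X) (u : ℕ → X → ℝ) (G : X → EReal) : Prop where
  mem : ∀ n, u n ∈ S.L
  monotone : Monotone u
  tendsto : ∀ x, Tendsto (fun n => (u n x : EReal)) atTop (𝓝 (G x))

namespace IncreasesTo

variable {u v : ℕ → X → ℝ} {G H : X → EReal}

theorem monotone_coe (hu : S.IncreasesTo u G) (x : X) : Monotone fun n => (u n x : EReal) :=
  EReal.coe_strictMono.monotone.comp ((Function.monotone_eval x).comp hu.monotone)

theorem monotone_coe_I (hu : S.IncreasesTo u G) : Monotone fun n => (S.I (u n) : EReal) :=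
  fun m n hmn => EReal.coe_le_coe_iff.2 (I_mono (hu.mem m) (hu.mem n) (hu.monotone hmn))

theorem le (hu : S.IncreasesTo u G) (n : ℕ) (x : X) : (u n x : EReal) ≤ G x :=
  (hu.monotone_coe x).ge_of_tendsto (hu.tendsto x) n

theorem ne_bot (hu : S.IncreasesTo u G) (x : X) : G x ≠ ⊥ :=
  ne_bot_of_le_ne_bot (EReal.coe_ne_bot _) (hu.le 0 x)

theorem add (hu : S.IncreasesTo u G) (hv : S.IncreasesTo v H) :
    S.IncreasesTo (u + v) (G + H) where
  mem n := S.add_mem (hu.mem n) (hv.mem n)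
  monotone := hu.monotone.add hv.monotone
  tendsto x :=
    tendsto_ereal_add_of_ne_bot (hu.ne_bot x) (hv.ne_bot x) (hu.tendsto x) (hv.tendsto x)

theorem sup (hu : S.IncreasesTo u G) (hv : S.IncreasesTo v H) :
    S.IncreasesTo (u ⊔ v) (G ⊔ H) where
  mem n := S.sup_mem (hu.mem n) (hv.mem n)
  monotone := hu.monotone.sup hv.monotone
  tendsto x := by
    simpa [EReal.coe_strictMono.monotone.map_max] using (hu.tendsto x).sup_nhds (hv.tendsto x)

theorem inf (hu : S.IncreasesTo u G) (hv : S.IncreasesTo v H) :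
    S.IncreasesTo (u ⊓ v) (G ⊓ H) where
  mem n := S.inf_mem (hu.mem n) (hv.mem n)
  monotone := hu.monotone.inf hv.monotone
  tendsto x := by
    simpa [EReal.coe_strictMono.monotone.map_min] using (hu.tendsto x).inf_nhds (hv.tendsto x)

theorem partialSups_diagonal {u : ℕ → ℕ → X → ℝ} {G : ℕ → X → EReal}
    (hu : ∀ k, S.IncreasesTo (u k) (G k)) :
    S.IncreasesTo (fun n => partialSups (fun k => u k n) n) (⨆ k, G k) where
  mem n := by
    have hL : SupClosed S.L := fun _ hf _ hg => S.sup_mem hf hg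
    exact hL.finsetSup'_mem Finset.nonempty_Iic fun k _ => (hu k).mem n
  monotone m n hmn := (partialSups_mono (fun k => (hu k).monotone hmn) m).trans
    ((partialSups _).monotone hmn)
  tendsto x := by
    refine tendsto_order.2 ⟨fun a ha => ?_, fun a ha => .of_forall fun n => ?_⟩
    · obtain ⟨k, hk⟩ : ∃ k, a < G k x := by simpa [lt_iSup_iff] using ha
      filter_upwards [((hu k).tendsto x).eventually_const_lt hk, eventually_ge_atTop k]
        with n hn hkn
      exact hn.trans_le <| EReal.coe_le_coe_iff.2 <|
        le_partialSups_of_le (fun k => u k n) hkn x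
    · obtain ⟨k, -, hk⟩ := exists_partialSups_eq (fun k => u k n x) n
      rw [Pi.partialSups_apply, hk]
      exact (((hu k).le n x).trans (le_iSup G k x)).trans_lt ha

theorem coe_I_le_iSup (hu : S.IncreasesTo u G) (hf : f ∈ S.L)
    (hfG : ∀ x, (f x : EReal) ≤ G x) : (S.I f : EReal) ≤ ⨆ n, (S.I (u n) : EReal) := by
  have hlim : Tendsto (fun n => S.I (f ⊓ u n)) atTop (𝓝 (S.I f)) := by
    refine tendsto_I_of_monotone (fun n => S.inf_mem hf (hu.mem n)) hf
      (monotone_const.inf hu.monotone) fun x => EReal.tendsto_coe.1 ?_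
    simpa [EReal.coe_strictMono.monotone.map_min, hfG x] using
      (tendsto_const_nhds (x := (f x : EReal))).inf_nhds (hu.tendsto x)
  refine le_of_tendsto' (EReal.tendsto_coe.2 hlim) fun n => le_iSup_of_le n ?_
  exact EReal.coe_le_coe_iff.2 (I_mono (S.inf_mem hf (hu.mem n)) (hu.mem n) inf_le_right)

theorem memLup (hu : S.IncreasesTo u G) : MemLup S G :=
  ⟨u, hu.mem, fun n => hu.monotone n.le_succ, hu.tendsto⟩

theorem Iup_eq_iSup (hu : S.IncreasesTo u G) : Iup S G = ⨆ n, (S.I (u n) : EReal) := by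
  apply le_antisymm
  · refine sSup_le ?_
    rintro c ⟨v, hvL, hvmono, hvlim, hc⟩
    have hv : S.IncreasesTo v G := ⟨hvL, monotone_nat_of_le_succ hvmono, hvlim⟩
    exact le_of_tendsto' hc fun n => hu.coe_I_le_iSup (hv.mem n) (hv.le n)
  · exact le_sSup ⟨u, hu.mem, fun n => hu.monotone n.le_succ, hu.tendsto,
      tendsto_atTop_iSup hu.monotone_coe_I⟩

theorem tendsto_I (hu : S.IncreasesTo u G) :
    Tendsto (fun n => (S.I (u n) : EReal)) atTop (𝓝 (Iup S G)) :=
  hu.Iup_eq_iSup ▸ tendsto_atTop_iSup hu.monotone_coe_I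

theorem Iup_ne_bot (hu : S.IncreasesTo u G) : Iup S G ≠ ⊥ :=
  ne_bot_of_le_ne_bot (EReal.coe_ne_bot _) (hu.monotone_coe_I.ge_of_tendsto hu.tendsto_I 0)

theorem tendsto_I_add_I (hu : S.IncreasesTo u G) (hv : S.IncreasesTo v H) :
    Tendsto (fun n => ((S.I (u n) + S.I (v n) : ℝ) : EReal)) atTop (𝓝 (Iup S G + Iup S H)) :=
  tendsto_ereal_add_of_ne_bot hu.Iup_ne_bot hv.Iup_ne_bot hu.tendsto_I hv.tendsto_I

end IncreasesTo

end IntegralSystem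

section UpperIntegral

variable {S : IntegralSystem X} {f g G H : X → EReal}

theorem MemLup.exists_increasesTo (hG : MemLup S G) : ∃ u, S.IncreasesTo u G :=
  let ⟨u, hL, hmono, hlim⟩ := hG
  ⟨u, hL, monotone_nat_of_le_succ hmono, hlim⟩

theorem MemLup.ne_bot (hG : MemLup S G) (x : X) : G x ≠ ⊥ :=
  let ⟨_, hu⟩ := hG.exists_increasesTo
  hu.ne_bot x

theorem MemLup.add (hG : MemLup S G) (hH : MemLup S H) : MemLup S (G + H) :=
  let ⟨_, hu⟩ := hG.exists_increasesTo
  let ⟨_, hv⟩ := hH.exists_increasesTo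
  (hu.add hv).memLup

theorem MemLup.sup (hG : MemLup S G) (hH : MemLup S H) : MemLup S (G ⊔ H) :=
  let ⟨_, hu⟩ := hG.exists_increasesTo
  let ⟨_, hv⟩ := hH.exists_increasesTo
  (hu.sup hv).memLup

theorem MemLup.inf (hG : MemLup S G) (hH : MemLup S H) : MemLup S (G ⊓ H) :=
  let ⟨_, hu⟩ := hG.exists_increasesTo
  let ⟨_, hv⟩ := hH.exists_increasesTo
  (hu.inf hv).memLup

theorem MemLup.iSup {G : ℕ → X → EReal} (hG : ∀ n, MemLup S (G n)) : MemLup S (⨆ n, G n) := by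
  choose u hu using fun n => (hG n).exists_increasesTo
  exact (IntegralSystem.IncreasesTo.partialSups_diagonal hu).memLup

theorem MemLup.coe_I_le_Iup (hG : MemLup S G) {f : X → ℝ} (hf : f ∈ S.L)
    (hfG : ∀ x, (f x : EReal) ≤ G x) : (S.I f : EReal) ≤ Iup S G :=
  let ⟨_, hu⟩ := hG.exists_increasesTo
  hu.Iup_eq_iSup ▸ hu.coe_I_le_iSup hf hfG

theorem MemLup.Iup_nonneg (hG : MemLup S G) (h0 : 0 ≤ G) : 0 ≤ Iup S G := by
  simpa [IntegralSystem.I_zero] using hG.coe_I_le_Iup S.zero_mem h0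

theorem MemLup.Iup_ne_bot (hG : MemLup S G) : Iup S G ≠ ⊥ :=
  let ⟨_, hu⟩ := hG.exists_increasesTo
  hu.Iup_ne_bot

theorem Iup_mono (hG : MemLup S G) (hH : MemLup S H) (hGH : G ≤ H) : Iup S G ≤ Iup S H := by
  obtain ⟨u, hu⟩ := hG.exists_increasesTo
  rw [hu.Iup_eq_iSup]
  exact iSup_le fun n => hH.coe_I_le_Iup (hu.mem n) fun x => (hu.le n x).trans (hGH x)

theorem Iup_add (hG : MemLup S G) (hH : MemLup S H) : Iup S (G + H) = Iup S G + Iup S H := by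
  obtain ⟨u, hu⟩ := hG.exists_increasesTo
  obtain ⟨v, hv⟩ := hH.exists_increasesTo
  refine tendsto_nhds_unique (hu.add hv).tendsto_I ?_
  simpa only [Pi.add_apply, S.I_add (hu.mem _) (hv.mem _)] using hu.tendsto_I_add_I hv

theorem Iup_sup_add_Iup_inf (hG : MemLup S G) (hH : MemLup S H) :
    Iup S (G ⊔ H) + Iup S (G ⊓ H) = Iup S G + Iup S H := by
  obtain ⟨u, hu⟩ := hG.exists_increasesTo
  obtain ⟨v, hv⟩ := hH.exists_increasesTo
  refine tendsto_nhds_unique ((hu.sup hv).tendsto_I_add_I (hu.inf hv)) ?_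
  simpa only [Pi.sup_apply, Pi.inf_apply, IntegralSystem.I_sup_add_I_inf (hu.mem _) (hv.mem _)]
    using hu.tendsto_I_add_I hv

theorem Iup_iSup {G : ℕ → X → EReal} (hG : ∀ n, MemLup S (G n)) (hmono : Monotone G) :
    Iup S (⨆ n, G n) = ⨆ n, Iup S (G n) := by
  apply le_antisymm
  · choose u hu using fun n => (hG n).exists_increasesTo
    have hd := IntegralSystem.IncreasesTo.partialSups_diagonal hu
    rw [hd.Iup_eq_iSup]
    refine iSup_mono fun n => (hG n).coe_I_le_Iup (hd.mem n) fun x => ?_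
    obtain ⟨k, hkn, hk⟩ := exists_partialSups_eq (fun k => u k n x) n
    rw [Pi.partialSups_apply, hk]
    exact ((hu k).le n x).trans (hmono hkn x)
  · exact iSup_le fun n => Iup_mono (hG n) (.iSup hG) (le_iSup G n)

theorem upperInt_le_Iup (hG : MemLup S G) (hfG : f ≤ G) : upperInt S f ≤ Iup S G :=
  sInf_le ⟨G, ⟨hG, hfG⟩, rfl⟩

theorem exists_memLup_Iup_lt {a : EReal} (ha : upperInt S f < a) :
    ∃ G, MemLup S G ∧ f ≤ G ∧ Iup S G < a := by
  obtain ⟨_, ⟨G, ⟨hG, hfG⟩, rfl⟩, hGa⟩ := sInf_lt_iff.1 ha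
  exact ⟨G, hG, hfG, hGa⟩

theorem upperInt_mono (hfg : f ≤ g) : upperInt S f ≤ upperInt S g :=
  sInf_le_sInf <| Set.image_mono fun _ hG => ⟨hG.1, fun x => (hfg x).trans (hG.2 x)⟩

theorem lowerInt_mono (hfg : f ≤ g) : lowerInt S f ≤ lowerInt S g :=
  sSup_le_sSup <| Set.image_mono fun _ hG => ⟨hG.1, fun x => (hG.2 x).trans (hfg x)⟩

theorem lowerInt_le_upperInt : lowerInt S f ≤ upperInt S f := by
  refine sSup_le ?_
  rintro _ ⟨H, ⟨hH, hHf⟩, rfl⟩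
  refine le_sInf ?_
  rintro _ ⟨G, ⟨hG, hfG⟩, rfl⟩
  change MemLup S (-H) at hH
  have hsub : 0 ≤ G + -H := fun x =>
    (EReal.sub_nonneg (.inr fun h => hH.ne_bot x (by simp [h])) (.inl (hG.ne_bot x))).2
      ((hHf x).trans (hfG x))
  change -Iup S (-H) ≤ Iup S G
  refine (EReal.sub_nonneg (.inr ?_) (.inl hG.Iup_ne_bot)).1 ?_
  · simpa using hH.Iup_ne_bot
  · simpa [sub_eq_add_neg, ← Iup_add hG hH] using (hG.add hH).Iup_nonneg hsub

theorem Iup_sup_le_add (hG : MemLup S G) (hH : MemLup S H) (hfG : f ≤ G) (hfH : f ≤ H)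
    (hbot : upperInt S f ≠ ⊥) (htop : upperInt S f ≠ ⊤) {a b : EReal}
    (ha : Iup S G ≤ upperInt S f + a) (hb : Iup S H ≤ b) : Iup S (G ⊔ H) ≤ b + a := by
  lift upperInt S f to ℝ using ⟨htop, hbot⟩ with c hc
  apply EReal.addLECancellable_coe c
  calc
    c + Iup S (G ⊔ H) ≤ Iup S (G ⊓ H) + Iup S (G ⊔ H) := by
      gcongr
      exact hc ▸ upperInt_le_Iup (hG.inf hH) (le_inf hfG hfH)
    _ = Iup S G + Iup S H := by rw [add_comm, Iup_sup_add_Iup_inf hG hH]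
    _ ≤ c + a + b := add_le_add ha hb
    _ = c + (b + a) := by abel

theorem exists_monotone_memLup_Iup_le {f : ℕ → X → EReal} (hf : Monotone f)
    (hbot : ∀ n, upperInt S (f n) ≠ ⊥) (htop : ∀ n, upperInt S (f n) ≠ ⊤) {ε : ℝ} (hε : 0 < ε) :
    ∃ G : ℕ → X → EReal, Monotone G ∧ f ≤ G ∧ (∀ n, MemLup S (G n)) ∧
      ∀ n, Iup S (G n) ≤ upperInt S (f n) + ε := by
  obtain ⟨δ, hδ, s, hs, hsε⟩ := posSumOfEncodable hε ℕ
  have hlt (n) : upperInt S (f n) < upperInt S (f n) + δ n := by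
    lift upperInt S (f n) to ℝ using ⟨htop n, hbot n⟩ with c
    exact_mod_cast lt_add_of_pos_right c (hδ n)
  choose G hG hfG hGlt using fun n => exists_memLup_Iup_lt (hlt n)
  have hmem (n) : MemLup S (partialSups G n) :=
    have hL : SupClosed {H | MemLup S H} := fun _ hG _ hH => hG.sup hH
    hL.finsetSup'_mem Finset.nonempty_Iic fun k _ => hG k
  have hfsup : f ≤ partialSups G := fun n => (hfG n).trans (le_partialSups G n)
  have hIup (n) : Iup S (partialSups G n) ≤
      upperInt S (f n) + (∑ k ∈ Finset.range (n + 1), δ k : ℝ) := by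
    induction n with
    | zero => simpa using (hGlt 0).le
    | succ n ih =>
      rw [partialSups_add_one, Finset.sum_range_succ, add_comm (Finset.sum _ _), EReal.coe_add,
        ← add_assoc]
      exact Iup_sup_le_add (hmem n) (hG _) (hfsup n) ((hf n.le_succ).trans (hfG _)) (hbot n)
        (htop n) ih (hGlt _).le
  refine ⟨partialSups G, (partialSups G).monotone, hfsup, hmem, fun n => (hIup n).trans ?_⟩
  gcongr
  exact (sum_le_hasSum _ (fun k _ => (hδ k).le) hs).trans hsε

theorem upperInt_iSup {f : ℕ → X → EReal} (hf : Monotone f) (hbot : upperInt S (f 0) ≠ ⊥) :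
    upperInt S (⨆ n, f n) = ⨆ n, upperInt S (f n) := by
  have hmono : Monotone fun n => upperInt S (f n) := fun _ _ hmn => upperInt_mono (hf hmn)
  refine le_antisymm (EReal.le_of_forall_lt_iff_le.1 fun z hz => ?_)
    (iSup_le fun n => upperInt_mono (le_iSup f n))
  have hbot' (n) : upperInt S (f n) ≠ ⊥ := ne_bot_of_le_ne_bot hbot (hmono n.zero_le)
  have htop (n) : upperInt S (f n) ≠ ⊤ := ((le_iSup _ n).trans_lt (hz.trans_le le_top)).ne
  obtain ⟨y, hy, hyz⟩ := EReal.lt_iff_exists_real_btwn.1 hz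
  obtain ⟨G, hGmono, hfG, hG, hGle⟩ := exists_monotone_memLup_Iup_le hf hbot' htop
    (sub_pos.2 (EReal.coe_lt_coe_iff.1 hyz))
  calc
    upperInt S (⨆ n, f n) ≤ Iup S (⨆ n, G n) := upperInt_le_Iup (.iSup hG) (iSup_mono hfG)
    _ = ⨆ n, Iup S (G n) := Iup_iSup hG hGmono
    _ ≤ y + (z - y : ℝ) := iSup_le fun n => (hGle n).trans <| by
      gcongr
      exact (le_iSup _ n).trans hy.le
    _ = z := by rw [← EReal.coe_add, add_sub_cancel]

end UpperIntegral

section Integrable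

variable {S : IntegralSystem X} {f : X → ℝ}

theorem Integrable1.coe_Int1 (hf : Integrable1 S f) :
    (Int1 S f : EReal) = upperInt S fun x => (f x : EReal) := by
  obtain ⟨c, -, hc⟩ := hf
  rw [Int1, hc, EReal.toReal_coe]

theorem integrable1_iff : Integrable1 S f ↔
    lowerInt S (fun x => (f x : EReal)) = upperInt S (fun x => (f x : EReal)) ∧
      upperInt S (fun x => (f x : EReal)) ≠ ⊥ ∧ upperInt S (fun x => (f x : EReal)) ≠ ⊤ := by
  constructor
  · rintro ⟨c, hl, hu⟩
    simp [hl, hu]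
  · rintro ⟨heq, hbot, htop⟩
    exact ⟨_, heq.trans (EReal.coe_toReal htop hbot).symm, (EReal.coe_toReal htop hbot).symm⟩

end Integrable

theorem daniell_monotone_convergence_general (S : IntegralSystem X) (f : ℕ → X → EReal)
    (F : X → EReal) (hf : ∀ n, lowerInt S (f n) = upperInt S (f n))
    (hbot : upperInt S (f 0) ≠ ⊥) (hmono : Monotone f)
    (hlim : ∀ x, Tendsto (fun n => f n x) atTop (𝓝 (F x))) :
    lowerInt S F = upperInt S F ∧ upperInt S F = ⨆ n, upperInt S (f n) := by
  obtain rfl : ⨆ n, f n = F := funext fun x => iSup_apply.trans <|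
    iSup_eq_of_tendsto ((Function.monotone_eval x).comp hmono) (hlim x)
  have hupper := upperInt_iSup hmono hbot
  refine ⟨le_antisymm lowerInt_le_upperInt ?_, hupper⟩
  rw [hupper]
  exact iSup_le fun n => hf n ▸ lowerInt_mono (le_iSup f n)

/-- Monotone convergence theorem for the Daniell extension: if `(f n)` is a sequence in
`L¹` increasing pointwise to the real-valued function `F`, then `F ∈ L¹` iff
`lim I¹ (f n) < ∞` (the limit of the increasing sequence `I¹ (f n)` being its supremum in
`(−∞,∞]`), and in that case `I¹ F = lim I¹ (f n)`. -/
theorem daniell_monotone_convergence (S : IntegralSystem X) (f : ℕ → X → ℝ) (F : X → ℝ)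
    (hf : ∀ n, Integrable1 S (f n))
    (hmono : ∀ n x, f n x ≤ f (n + 1) x)
    (hlim : ∀ x, Tendsto (fun n => f n x) atTop (𝓝 (F x))) :
    (Integrable1 S F ↔ (⨆ n, ((Int1 S (f n) : EReal))) < ⊤) ∧
    (Integrable1 S F → Tendsto (fun n => Int1 S (f n)) atTop (𝓝 (Int1 S F))) := by
  have hI (n) := (hf n).coe_Int1
  have hbot (n) : upperInt S (fun x => (f n x : EReal)) ≠ ⊥ := (integrable1_iff.1 (hf n)).2.1
  have hcoe : Monotone fun n x => (f n x : EReal) := monotone_nat_of_le_succ fun n x =>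
    EReal.coe_le_coe_iff.2 (hmono n x)
  obtain ⟨heq, hsup⟩ := daniell_monotone_convergence_general S (fun n x => f n x) (fun x => F x)
    (fun n => (integrable1_iff.1 (hf n)).1) (hbot 0) hcoe fun x => EReal.tendsto_coe.2 (hlim x)
  have hFbot := ne_bot_of_le_ne_bot (hbot 0) (hsup ▸ le_iSup _ 0)
  simp only [← EReal.tendsto_coe, hI, ← hsup]
  refine ⟨by simp [integrable1_iff, heq, hFbot, lt_top_iff_ne_top], fun hF => ?_⟩
  rw [hF.coe_Int1, hsup]
  exact tendsto_atTop_iSup fun m n hmn => upperInt_mono (hcoe hmn)
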